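/- For every index j ∈ {0, …, 2g} one has pⱼ * h₀ = ((j : ℚ) - g) • pⱼ. -/

import Mathlib

theorem aeval_mul_eig {A : Type*} [Ring A] [Algebra ℚ A] (h x : A) (c : ℚ)
    (hx : h * x = c • x) (f : Polynomial ℚ) :
    Polynomial.aeval h f * x = f.eval c • x := by
  have hpow : ∀ n : ℕ, h ^ n * x = c ^ n • x := by
    intro n
    induction n with
    | zero => simp
    | succ n ih => rw [pow_succ, mul_assoc, hx, mul_smul_comm, ih, smul_smul, pow_succ, mul_comm]
  induction f using Polynomial.induction_on' with
  | add f g hf hg => simp [add_mul, hf, hg, add_smul]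
  | monomial n a =>
    rw [Polynomial.aeval_monomial, mul_assoc, hpow, Polynomial.eval_monomial, mul_smul,
      Algebra.smul_def a]

/-- CONTEXT: an associative unital algebra `A` over `ℚ`, elements `h₀` and
`p 0, …, p (2g)` with `∑ i, p i = 1` and `h₀ * p i = ((i : ℚ) - g) • p i`.
CONCLUSION: `p j * h₀ = ((j : ℚ) - g) • p j` for every `j`. -/
theorem stmt15 {A : Type*} [Ring A] [Algebra ℚ A] (g : ℕ)
    (h₀ : A) (p : Fin (2 * g + 1) → A)
    (hsum : ∑ i, p i = 1)
    (hp : ∀ i, h₀ * p i = (((i : ℕ) : ℚ) - (g : ℚ)) • p i) :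
    ∀ j, p j * h₀ = (((j : ℕ) : ℚ) - (g : ℚ)) • p j := by
  intro j
  let v : Fin (2 * g + 1) → ℚ := fun i => ((i : ℕ) : ℚ) - (g : ℚ)
  have hv : Set.InjOn v (Finset.univ : Finset (Fin (2 * g + 1))) := by
    intro a _ b _ hab
    have h1 : ((a : ℕ) : ℚ) = ((b : ℕ) : ℚ) := sub_left_injective hab
    exact Fin.ext (by exact_mod_cast h1)
  have key : Polynomial.aeval h₀ (Lagrange.basis Finset.univ v j) = p j := by
    rw [← mul_one (Polynomial.aeval h₀ _), ← hsum, Finset.mul_sum, Finset.sum_eq_single j]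
    · rw [aeval_mul_eig h₀ (p j) (v j) (hp j),
        Lagrange.eval_basis_self hv (Finset.mem_univ j), one_smul]
    · intro i _ hij
      rw [aeval_mul_eig h₀ (p i) (v i) (hp i),
        Lagrange.eval_basis_of_ne hij.symm (Finset.mem_univ i), zero_smul]
    · intro h
      exact absurd (Finset.mem_univ j) h
  rw [← hp j, ← key]
  have := congrArg (Polynomial.aeval h₀)
    (mul_comm (Lagrange.basis Finset.univ v j) Polynomial.X)
  simpa only [map_mul, Polynomial.aeval_X] using this
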